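/- Let 1 ≤ d ≤ n and λ ∈ [0,1], and let E_λ : M_n(ℂ) → M_{n+1}(ℂ) be the quantum erasure channel, E_λ(ρ) = block-diag(λρ, (1−λ)tr(ρ)). Then C_prod^d(E_λ) = λ log₂(nd). -/

import Mathlib

noncomputable section

open scoped BigOperators ComplexOrder
open Matrix

/-- The von Neumann entropy (base 2) `S(ρ) = −tr(ρ log₂ ρ)`, computed via the eigenvalues
(with the convention `0 log 0 = 0`). -/
def entropy2 {ι : Type*} [Fintype ι] [DecidableEq ι] (ρ : Matrix ι ι ℂ) : ℝ :=
  if h : ρ.IsHermitian then -∑ i, h.eigenvalues i * Real.logb 2 (h.eigenvalues i) else 0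

/-- The partial trace over the first tensor factor, `(tr ⊗ id)`. -/
def ptrace1 {ι κ : Type*} [Fintype ι] (X : Matrix (ι × κ) (ι × κ) ℂ) : Matrix κ κ ℂ :=
  fun u v => ∑ a : ι, X (a, u) (a, v)

/-- The partial trace over the second tensor factor, `(id ⊗ tr)`. -/
def ptrace2 {ι κ : Type*} [Fintype κ] (X : Matrix (ι × κ) (ι × κ) ℂ) : Matrix ι ι ℂ :=
  fun a b => ∑ j : κ, X (a, j) (b, j)

/-- `id_d ⊗ N`, applying `N` to each `d × d` block. -/
def idTensor (d : ℕ) {ι κ : Type*}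
    (N : Matrix ι ι ℂ → Matrix κ κ ℂ)
    (X : Matrix (Fin d × ι) (Fin d × ι) ℂ) : Matrix (Fin d × κ) (Fin d × κ) ℂ :=
  fun pq rs => N (fun u v => X (pq.1, u) (rs.1, v)) pq.2 rs.2

/-- The product-state classical capacity with `d`-dimensional entanglement assistance,
`C_prod^d(N) = sup { S(∑ λ_i N((tr_d ⊗ id)(ρ_i))) + ∑ λ_i [S((id ⊗ tr)(ρ_i)) − S((id_d ⊗ N)(ρ_i))] }`,
the supremum running over finite ensembles of states `ρ_i` on `ℂ^d ⊗ ℂ^n`. -/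
def Cprod (d : ℕ) {ι κ : Type*} [Fintype ι] [DecidableEq ι] [Fintype κ] [DecidableEq κ]
    (N : Matrix ι ι ℂ → Matrix κ κ ℂ) : ℝ :=
  sSup { r : ℝ | ∃ (k : ℕ) (w : Fin k → ℝ) (ρ : Fin k → Matrix (Fin d × ι) (Fin d × ι) ℂ),
    (∀ i, 0 ≤ w i) ∧ (∑ i, w i = 1) ∧
    (∀ i, (ρ i).PosSemidef ∧ Matrix.trace (ρ i) = 1) ∧
    r = entropy2 (∑ i, w i • N (ptrace1 (ρ i))) +
        ∑ i, w i * (entropy2 (ptrace2 (ρ i)) - entropy2 (idTensor d N (ρ i))) }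

/-- The quantum depolarizing channel `D_λ(ρ) = λρ + (1−λ)(tr(ρ)/n) I_n`. -/
def depol (n : ℕ) (lam : ℝ) (ρ : Matrix (Fin n) (Fin n) ℂ) : Matrix (Fin n) (Fin n) ℂ :=
  (lam : ℂ) • ρ + (((1 - lam) / n : ℝ) : ℂ) • Matrix.trace ρ • (1 : Matrix (Fin n) (Fin n) ℂ)

/-- The quantum erasure channel `E_λ : M_n → M_{n+1}`,
`E_λ(ρ) = block-diag(λρ, (1−λ)tr(ρ))`. -/
def erasure (n : ℕ) (lam : ℝ) (ρ : Matrix (Fin n) (Fin n) ℂ) :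
    Matrix (Fin (n + 1)) (Fin (n + 1)) ℂ :=
  fun a b =>
    if ha : (a : ℕ) < n then
      if hb : (b : ℕ) < n then (lam : ℂ) * ρ ⟨a, ha⟩ ⟨b, hb⟩ else 0
    else if (b : ℕ) < n then 0 else ((1 - lam : ℝ) : ℂ) * Matrix.trace ρ


/-- The function `x ↦ -x log₂ x`. -/
def gfun (x : ℝ) : ℝ := -(x * Real.logb 2 x)

theorem gfun_eq (x : ℝ) : gfun x = Real.negMulLog x / Real.log 2 := by
  simp only [gfun, Real.negMulLog, Real.logb]; ring

theorem gfun_mul (x y : ℝ) : gfun (x * y) = y * gfun x + x * gfun y := by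
  simp only [gfun_eq, Real.negMulLog_mul]; ring

theorem gfun_zero : gfun 0 = 0 := by simp [gfun]
theorem gfun_one : gfun 1 = 0 := by simp [gfun]

theorem entropy2_of_herm {ι : Type*} [Fintype ι] [DecidableEq ι] {A : Matrix ι ι ℂ}
    (h : A.IsHermitian) : entropy2 A = ∑ i, gfun (h.eigenvalues i) := by
  simp [entropy2, h, gfun]

open Polynomial in
theorem entropy2_of_charpoly {ι κ : Type*} [Fintype ι] [DecidableEq ι] [Fintype κ]
    {A : Matrix ι ι ℂ} (h : A.IsHermitian) (μ : κ → ℝ)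
    (hc : A.charpoly = ∏ i, (X - C (μ i : ℂ))) : entropy2 A = ∑ i, gfun (μ i) := by
  rw [entropy2_of_herm h]
  have h1 := h.roots_charpoly_eq_eigenvalues
  have h2 : A.charpoly.roots = Multiset.map (fun i => (μ i : ℂ)) Finset.univ.val := by
    rw [hc, Polynomial.roots_prod]
    · simp
    · simp [Finset.prod_ne_zero_iff, Polynomial.X_sub_C_ne_zero]
  rw [h1] at h2
  have h3 := congrArg (fun s => (Multiset.map (fun z : ℂ => gfun z.re) s).sum) h2
  simpa [Multiset.map_map, Function.comp_def] using h3

open Polynomial in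
theorem charpoly_smul_herm {ι : Type*} [Fintype ι] [DecidableEq ι] {A : Matrix ι ι ℂ}
    (hA : A.IsHermitian) (c : ℝ) :
    ((c : ℂ) • A).charpoly = ∏ i, (X - C ((c * hA.eigenvalues i : ℝ) : ℂ)) := by
  conv_lhs => rw [hA.spectral_theorem, ← map_smul, Unitary.conjStarAlgAut_apply,
    charpoly_mul_comm, ← mul_assoc, Unitary.coe_star_mul_self, one_mul, ← diagonal_smul,
    charpoly_diagonal]
  simp

theorem sum_eig {ι : Type*} [Fintype ι] [DecidableEq ι] {A : Matrix ι ι ℂ}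
    (hA : A.IsHermitian) (ht : A.trace = 1) : ∑ i, hA.eigenvalues i = 1 := by
  have := hA.trace_eq_sum_eigenvalues
  rw [ht] at this
  have h2 : ((∑ i, hA.eigenvalues i : ℝ) : ℂ) = 1 := by rw [this]; simp
  exact_mod_cast h2

theorem entropy2_block {ι κ τ : Type*} [Fintype ι] [DecidableEq ι] [Fintype κ] [DecidableEq κ]
    [Fintype τ] [DecidableEq τ] {A : Matrix ι ι ℂ} {B : Matrix κ κ ℂ} {M : Matrix τ τ ℂ}
    (hA : A.IsHermitian) (hB : B.IsHermitian) (tA : A.trace = 1) (tB : B.trace = 1)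
    (e : ι ⊕ κ ≃ τ) (c c' : ℝ)
    (hM : M = reindex e e (fromBlocks ((c : ℂ) • A) 0 0 ((c' : ℂ) • B))) :
    entropy2 M = c * entropy2 A + c' * entropy2 B + gfun c + gfun c' := by
  have hcA : ((c : ℂ) • A).IsHermitian := by
    rw [IsHermitian, conjTranspose_smul, hA.eq]; simp
  have hcB : ((c' : ℂ) • B).IsHermitian := by
    rw [IsHermitian, conjTranspose_smul, hB.eq]; simp
  have hH : M.IsHermitian := by
    rw [hM]
    exact (IsHermitian.fromBlocks hcA conjTranspose_zero hcB).submatrix e.symm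
  rw [entropy2_of_charpoly hH
    (Sum.elim (fun i => c * hA.eigenvalues i) (fun i => c' * hB.eigenvalues i))]
  · rw [Fintype.sum_sum_type]
    simp only [Sum.elim_inl, Sum.elim_inr, gfun_mul, Finset.sum_add_distrib, ← Finset.mul_sum,
      ← Finset.sum_mul, sum_eig hA tA, sum_eig hB tB, ← entropy2_of_herm]
    ring
  · rw [hM, charpoly_reindex, charpoly_fromBlocks_zero₁₂, charpoly_smul_herm hA,
      charpoly_smul_herm hB, Fintype.prod_sum_type]
    simp

theorem entropy2_nonneg {ι : Type*} [Fintype ι] [DecidableEq ι] {A : Matrix ι ι ℂ}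
    (hA : A.PosSemidef) (tA : A.trace = 1) : 0 ≤ entropy2 A := by
  rw [entropy2_of_herm hA.1]
  refine Finset.sum_nonneg fun i _ => ?_
  rw [gfun_eq]
  refine div_nonneg (Real.negMulLog_nonneg (hA.eigenvalues_nonneg i) ?_)
    (Real.log_nonneg (by norm_num))
  rw [← sum_eig hA.1 tA]
  exact Finset.single_le_sum (fun j _ => hA.eigenvalues_nonneg j) (Finset.mem_univ i)

theorem entropy2_le {ι : Type*} [Fintype ι] [DecidableEq ι] [Nonempty ι] {A : Matrix ι ι ℂ}
    (hA : A.PosSemidef) (tA : A.trace = 1) :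
    entropy2 A ≤ Real.logb 2 (Fintype.card ι) := by
  rw [entropy2_of_herm hA.1]
  have hn : (0 : ℝ) < Fintype.card ι := by exact_mod_cast Fintype.card_pos
  have h := Real.concaveOn_negMulLog.le_map_sum (t := Finset.univ)
    (w := fun _ : ι => (Fintype.card ι : ℝ)⁻¹) (p := hA.1.eigenvalues)
    (fun _ _ => by positivity) (by simp) (fun i _ => hA.eigenvalues_nonneg i)
  simp only [smul_eq_mul, ← Finset.mul_sum, sum_eig hA.1 tA, mul_one] at h
  simp only [gfun_eq, ← Finset.sum_div, Real.logb]
  have hl : 0 < Real.log 2 := Real.log_pos (by norm_num)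
  gcongr
  simp only [Real.negMulLog, Real.log_inv] at h ⊢
  have h2 : (Fintype.card ι : ℝ)⁻¹ * ∑ i, -hA.1.eigenvalues i * Real.log (hA.1.eigenvalues i)
    ≤ (Fintype.card ι : ℝ)⁻¹ * Real.log (Fintype.card ι) := by linarith
  exact le_of_mul_le_mul_left h2 (by positivity)

theorem entropy2_idem {ι : Type*} [Fintype ι] [DecidableEq ι] {A : Matrix ι ι ℂ}
    (hA : A.IsHermitian) (h2 : A * A = A) : entropy2 A = 0 := by
  rw [entropy2_of_herm hA]
  refine Finset.sum_eq_zero fun i _ => ?_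
  have h := (show IsIdempotentElem A from h2).spectrum_subset ℝ (hA.eigenvalues_mem_spectrum_real i)
  rcases h with h | h
  · rw [h, gfun_zero]
  · rw [h, gfun_one]

open Polynomial in
theorem entropy2_mixed {ι : Type*} [Fintype ι] [DecidableEq ι] [Nonempty ι] :
    entropy2 (((Fintype.card ι : ℂ)⁻¹) • (1 : Matrix ι ι ℂ)) =
      Real.logb 2 (Fintype.card ι) := by
  have hn : (Fintype.card ι : ℝ) ≠ 0 := by exact_mod_cast Fintype.card_ne_zero
  rw [entropy2_of_charpoly (κ := ι) (μ := fun _ => (Fintype.card ι : ℝ)⁻¹)]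
  · simp only [gfun, Real.logb_inv, Finset.sum_const, Finset.card_univ, nsmul_eq_mul]
    field_simp
  · rw [IsHermitian, conjTranspose_smul]; simp
  · rw [smul_one_eq_diagonal, charpoly_diagonal]; simp

theorem ptrace1_eq {ι κ : Type*} [Fintype ι] (X : Matrix (ι × κ) (ι × κ) ℂ) :
    ptrace1 X = ∑ a : ι, X.submatrix (fun u => (a, u)) (fun u => (a, u)) := by
  ext u v; simp [ptrace1, Matrix.sum_apply]

theorem ptrace2_eq {ι κ : Type*} [Fintype κ] (X : Matrix (ι × κ) (ι × κ) ℂ) :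
    ptrace2 X = ∑ j : κ, X.submatrix (fun u => (u, j)) (fun u => (u, j)) := by
  ext u v; simp [ptrace2, Matrix.sum_apply]

theorem ptrace1_psd {ι κ : Type*} [Fintype ι] {X : Matrix (ι × κ) (ι × κ) ℂ}
    (h : X.PosSemidef) : (ptrace1 X).PosSemidef := by
  rw [ptrace1_eq]; exact posSemidef_sum _ fun a _ => h.submatrix _

theorem ptrace2_psd {ι κ : Type*} [Fintype κ] {X : Matrix (ι × κ) (ι × κ) ℂ}
    (h : X.PosSemidef) : (ptrace2 X).PosSemidef := by
  rw [ptrace2_eq]; exact posSemidef_sum _ fun a _ => h.submatrix _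

theorem ptrace1_trace {ι κ : Type*} [Fintype ι] [Fintype κ] (X : Matrix (ι × κ) (ι × κ) ℂ) :
    (ptrace1 X).trace = X.trace := by
  simp only [trace, diag, ptrace1, Fintype.sum_prod_type]; exact Finset.sum_comm

theorem ptrace2_trace {ι κ : Type*} [Fintype ι] [Fintype κ] (X : Matrix (ι × κ) (ι × κ) ℂ) :
    (ptrace2 X).trace = X.trace := by
  simp only [trace, diag, ptrace2, Fintype.sum_prod_type]

theorem erasure_entropy (n : ℕ) (lam : ℝ) {A : Matrix (Fin n) (Fin n) ℂ} (hA : A.IsHermitian)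
    (tA : A.trace = 1) :
    entropy2 (erasure n lam A) = lam * entropy2 A + gfun lam + gfun (1 - lam) := by
  rw [entropy2_block (B := (1 : Matrix (Fin 1) (Fin 1) ℂ)) hA isHermitian_one tA (by simp)
    finSumFinEquiv lam (1 - lam), entropy2_idem isHermitian_one (by simp)]
  · ring
  · rw [← Equiv.symm_apply_eq, reindex_symm]
    ext a b
    rcases a with a | a <;> rcases b with b | b <;>
      simp [erasure, tA, Matrix.one_apply, eq_iff_true_of_subsingleton]

theorem erasure_sum (n : ℕ) (lam : ℝ) {k : ℕ} (w : Fin k → ℝ)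
    (A : Fin k → Matrix (Fin n) (Fin n) ℂ) :
    ∑ i, w i • erasure n lam (A i) = erasure n lam (∑ i, w i • A i) := by
  ext a b
  simp only [Matrix.sum_apply, Matrix.smul_apply, erasure, trace_sum, trace_smul]
  split_ifs <;> simp [Finset.mul_sum] <;> (refine Finset.sum_congr rfl fun i _ => ?_) <;> ring

/-- Splitting `Fin d × Fin (n+1)`. -/
def splitEquiv (d n : ℕ) : (Fin d × Fin n) ⊕ Fin d ≃ Fin d × Fin (n + 1) :=
  ((Equiv.sumCongr (Equiv.refl _) (Equiv.prodUnique (Fin d) (Fin 1)).symm).trans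
    (Equiv.prodSumDistrib (Fin d) (Fin n) (Fin 1)).symm).trans
    (Equiv.prodCongr (Equiv.refl _) finSumFinEquiv)

theorem idTensor_entropy (n d : ℕ) (lam : ℝ) {X : Matrix (Fin d × Fin n) (Fin d × Fin n) ℂ}
    (hX : X.PosSemidef) (tX : X.trace = 1) :
    entropy2 (idTensor d (erasure n lam) X) =
      lam * entropy2 X + (1 - lam) * entropy2 (ptrace2 X) + gfun lam + gfun (1 - lam) := by
  apply entropy2_block hX.1 (ptrace2_psd hX).1 tX ((ptrace2_trace X).trans tX) (splitEquiv d n)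
  rw [← Equiv.symm_apply_eq, reindex_symm]
  ext a b
  rcases a with a | a <;> rcases b with b | b <;>
    simp [erasure, idTensor, splitEquiv, ptrace2, trace, diag]

theorem value_eq (n d : ℕ) (lam : ℝ) {k : ℕ} (w : Fin k → ℝ)
    (ρ : Fin k → Matrix (Fin d × Fin n) (Fin d × Fin n) ℂ)
    (hw : ∀ i, 0 ≤ w i) (hs : ∑ i, w i = 1)
    (hρ : ∀ i, (ρ i).PosSemidef ∧ Matrix.trace (ρ i) = 1) :
    (∑ i, w i • ptrace1 (ρ i)).PosSemidef ∧ (∑ i, w i • ptrace1 (ρ i)).trace = 1 ∧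
    entropy2 (∑ i, w i • erasure n lam (ptrace1 (ρ i))) +
        ∑ i, w i * (entropy2 (ptrace2 (ρ i)) - entropy2 (idTensor d (erasure n lam) (ρ i))) =
    lam * (entropy2 (∑ i, w i • ptrace1 (ρ i)) +
      ∑ i, w i * (entropy2 (ptrace2 (ρ i)) - entropy2 (ρ i))) := by
  have h1 : (∑ i, w i • ptrace1 (ρ i)).PosSemidef :=
    posSemidef_sum _ fun i _ => (ptrace1_psd (hρ i).1).smul (hw i)
  have h2 : (∑ i, w i • ptrace1 (ρ i)).trace = 1 := by
    simp only [trace_sum, trace_smul, ptrace1_trace, (hρ _).2]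
    rw [← Finset.sum_smul, hs, one_smul]
  refine ⟨h1, h2, ?_⟩
  rw [erasure_sum, erasure_entropy n lam h1.1 h2]
  have h3 : ∀ i, w i * (entropy2 (ptrace2 (ρ i)) - entropy2 (idTensor d (erasure n lam) (ρ i))) =
      lam * (w i * (entropy2 (ptrace2 (ρ i)) - entropy2 (ρ i))) -
        w i * (gfun lam + gfun (1 - lam)) := by
    intro i
    rw [idTensor_entropy n d lam (hρ i).1 (hρ i).2]; ring
  simp only [h3, Finset.sum_sub_distrib, ← Finset.mul_sum, ← Finset.sum_mul, hs]
  ring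

/-- The shifted maximally entangled vectors. -/
def psi (n d : ℕ) [NeZero n] (hdn : d ≤ n) (i : Fin n) : Fin d × Fin n → ℂ :=
  fun p => if p.2 = Fin.castLE hdn p.1 + i then (((Real.sqrt d)⁻¹ : ℝ) : ℂ) else 0

theorem psi_mul (n d : ℕ) [NeZero n] (hdn : d ≤ n) (i : Fin n) (p q : Fin d × Fin n) :
    vecMulVec (psi n d hdn i) (star (psi n d hdn i)) p q =
      if p.2 = Fin.castLE hdn p.1 + i ∧ q.2 = Fin.castLE hdn q.1 + i then (d : ℂ)⁻¹ else 0 := by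
  have h : (((Real.sqrt d)⁻¹ : ℝ) : ℂ) * (((Real.sqrt d)⁻¹ : ℝ) : ℂ) = (d : ℂ)⁻¹ := by
    rw [← Complex.ofReal_mul, ← mul_inv, Real.mul_self_sqrt (by positivity)]; simp
  simp only [vecMulVec_apply, psi, Pi.star_apply]
  split_ifs <;> simp_all

theorem psi_ptrace2 (n d : ℕ) [NeZero n] (hdn : d ≤ n) (i : Fin n) :
    ptrace2 (vecMulVec (psi n d hdn i) (star (psi n d hdn i))) = ((d : ℂ)⁻¹) • 1 := by
  ext a b
  simp only [ptrace2, psi_mul, ite_and, Matrix.smul_apply, Matrix.one_apply]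
  simp

theorem psi_ptrace1_sum (n d : ℕ) [NeZero n] (hd : 1 ≤ d) (hdn : d ≤ n) :
    ∑ i, ptrace1 (vecMulVec (psi n d hdn i) (star (psi n d hdn i))) = 1 := by
  have hd0 : (d : ℂ) ≠ 0 := by exact_mod_cast (by omega : d ≠ 0)
  ext u v
  simp only [Matrix.sum_apply, ptrace1, psi_mul, Matrix.one_apply]
  rw [Finset.sum_comm]
  split_ifs with h
  · subst h
    have : ∀ (x : Fin d) (i : Fin n), (u = Fin.castLE hdn x + i) ↔ (i = u - Fin.castLE hdn x) := by
      intro x i; rw [eq_sub_iff_add_eq', eq_comm]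
    simp only [and_self, this]
    simp [hd0]
  · refine Finset.sum_eq_zero fun a _ => Finset.sum_eq_zero fun i _ => ?_
    rw [if_neg]
    rintro ⟨h1, h2⟩
    exact h (h1.trans h2.symm)

theorem psi_trace (n d : ℕ) [NeZero n] (hd : 1 ≤ d) (hdn : d ≤ n) (i : Fin n) :
    (vecMulVec (psi n d hdn i) (star (psi n d hdn i))).trace = 1 := by
  have hd0 : (d : ℂ) ≠ 0 := by exact_mod_cast (by omega : d ≠ 0)
  rw [← ptrace2_trace, psi_ptrace2]; simp [hd0]

theorem psi_idem (n d : ℕ) [NeZero n] (hd : 1 ≤ d) (hdn : d ≤ n) (i : Fin n) :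
    vecMulVec (psi n d hdn i) (star (psi n d hdn i)) *
      vecMulVec (psi n d hdn i) (star (psi n d hdn i)) =
    vecMulVec (psi n d hdn i) (star (psi n d hdn i)) := by
  have h := psi_trace n d hd hdn i
  rw [trace_vecMulVec] at h
  rw [vecMulVec_mul_vecMulVec, dotProduct_comm, h]
  simp

/-- the product-state `d`-restricted classical capacity of the quantum erasure
channel equals `λ log₂(nd)`. -/
theorem statement12 (n d : ℕ) (hd : 1 ≤ d) (hdn : d ≤ n) (lam : ℝ) (hl0 : 0 ≤ lam)
    (hl1 : lam ≤ 1) :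
    Cprod d (erasure n lam) = lam * Real.logb 2 ((n : ℝ) * d) := by
  haveI : NeZero n := ⟨by omega⟩
  haveI : NeZero d := ⟨by omega⟩
  have hn0 : (n : ℝ) ≠ 0 := by exact_mod_cast NeZero.ne n
  have hd0 : (d : ℝ) ≠ 0 := by exact_mod_cast NeZero.ne d
  rw [Real.logb_mul hn0 hd0]
  apply IsGreatest.csSup_eq
  constructor
  · refine ⟨n, fun _ => (n : ℝ)⁻¹,
      fun i => vecMulVec (psi n d hdn i) (star (psi n d hdn i)), fun _ => by positivity,
      by simp [hn0], fun i => ⟨posSemidef_vecMulVec_self_star _, psi_trace n d hd hdn i⟩, ?_⟩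
    rw [(value_eq n d lam (fun _ => (n : ℝ)⁻¹) _ (fun _ => by positivity) (by simp [hn0])
      fun i => ⟨posSemidef_vecMulVec_self_star _, psi_trace n d hd hdn i⟩).2.2]
    have e1 := entropy2_mixed (ι := Fin n)
    have e2 := entropy2_mixed (ι := Fin d)
    simp only [Fintype.card_fin] at e1 e2
    have e3 : (n : ℝ)⁻¹ • (1 : Matrix (Fin n) (Fin n) ℂ) = (n : ℂ)⁻¹ • 1 := by
      ext u v; simp [Matrix.smul_apply]
    rw [← Finset.smul_sum, psi_ptrace1_sum n d hd hdn, e3, e1]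
    simp only [psi_ptrace2, e2,
      entropy2_idem (posSemidef_vecMulVec_self_star _).1 (psi_idem n d hd hdn _)]
    simp [hn0]
  · rintro r ⟨k, w, ρ, hw, hs, hρ, rfl⟩
    obtain ⟨h1, h2, h3⟩ := value_eq n d lam w ρ hw hs hρ
    rw [h3]
    refine mul_le_mul_of_nonneg_left (add_le_add ?_ ?_) hl0
    · simpa using entropy2_le h1 h2
    · calc _ ≤ ∑ i, w i * Real.logb 2 d := by
            refine Finset.sum_le_sum fun i _ => mul_le_mul_of_nonneg_left ?_ (hw i)
            have a := entropy2_le (ptrace2_psd (hρ i).1) ((ptrace2_trace _).trans (hρ i).2)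
            have b := entropy2_nonneg (hρ i).1 (hρ i).2
            simp only [Fintype.card_fin] at a
            linarith
        _ = _ := by rw [← Finset.sum_mul, hs, one_mul]
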